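/- arXiv:1205.5945 — 2 statements merged into one kernel-verified Lean document; each statement's English description precedes it below -/
import Mathlib

section
/- Let R be a Noetherian unique factorization domain, let M and N be finitely generated torsion R-modules, and let α : M → N and β : N → M be R-linear maps that are pseudo-injections (their kernels are pseudo-null). Then the composition β ∘ α : M → M is a pseudo-isomorphism (its kernel and cokernel are pseudo-null). -/
/-- A module `M` over `R` is pseudo-null if its localization at every height-one
prime ideal of `R` vanishes. -/
def IsPseudoNull (R : Type*) [CommRing R] (M : Type*) [AddCommGroup M] [Module R M] : Prop :=
  ∀ P : PrimeSpectrum R, Order.height P = 1 →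
    Subsingleton (LocalizedModule P.asIdeal.primeCompl M)

/-- A linear map is a pseudo-isomorphism if its kernel and cokernel are pseudo-null. -/
def IsPseudoIsom (R : Type*) [CommRing R] {M N : Type*} [AddCommGroup M] [Module R M]
    [AddCommGroup N] [Module R N] (f : M →ₗ[R] N) : Prop :=
  IsPseudoNull R (LinearMap.ker f) ∧ IsPseudoNull R (N ⧸ LinearMap.range f)

theorem pn_iff_aux (R : Type*) [CommRing R] (M : Type*) [AddCommGroup M] [Module R M]
    (P : PrimeSpectrum R) : Subsingleton (LocalizedModule P.asIdeal.primeCompl M) ↔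
      ∀ m : M, ∃ s ∈ P.asIdeal.primeCompl, s • m = 0 :=
  LocalizedModule.subsingleton_iff

theorem artinian_aux (A : Type*) [CommRing A] [IsNoetherianRing A] [Ring.KrullDimLE 1 A]
    (M : Type*) [AddCommGroup M] [Module A M] [Module.Finite A M]
    (a : A) (ha : a ∈ nonZeroDivisors A) (h : ∀ m : M, a • m = 0) : IsArtinian A M := by
  have h1 := isFiniteLength_quotient_span_singleton A ha
  rw [isFiniteLength_iff_isNoetherian_isArtinian] at h1
  have := h1.2
  obtain ⟨n, f, hf⟩ := Module.Finite.exists_fin' A M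
  let g : (Fin n → A ⧸ Ideal.span {a}) →ₗ[A] M :=
    LinearMap.lsum A (fun _ => A ⧸ Ideal.span {a}) A fun i =>
      Submodule.liftQ (Ideal.span {a}) (LinearMap.toSpanSingleton A M (f (Pi.single i 1))) (by
        rw [Ideal.span_le]
        simp [h])
  refine isArtinian_of_surjective _ g fun m => ?_
  obtain ⟨x, rfl⟩ := hf m
  refine ⟨fun i => Ideal.Quotient.mk _ (x i), ?_⟩
  conv_rhs => rw [pi_eq_sum_univ' x, map_sum]
  simp only [g, LinearMap.lsum_apply, LinearMap.sum_apply, LinearMap.comp_apply, LinearMap.proj_apply]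
  refine Finset.sum_congr rfl fun i _ => ?_
  erw [Submodule.liftQ_apply]
  simp only [LinearMap.toSpanSingleton_apply, ← map_smul]

/-- Over a Noetherian UFD, if `α : M → N` and `β : N → M` are pseudo-injections between
finitely generated torsion modules, then `β ∘ α` is a pseudo-isomorphism. -/
theorem stmt_3 (R : Type*) [CommRing R] [IsDomain R] [IsNoetherianRing R]
    [UniqueFactorizationMonoid R]
    (M N : Type*) [AddCommGroup M] [Module R M] [Module.Finite R M]
    [AddCommGroup N] [Module R N] [Module.Finite R N]
    (hM : Module.IsTorsion R M) (hN : Module.IsTorsion R N)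
    (α : M →ₗ[R] N) (β : N →ₗ[R] M)
    (hα : IsPseudoNull R (LinearMap.ker α)) (hβ : IsPseudoNull R (LinearMap.ker β)) :
    IsPseudoIsom R (β ∘ₗ α) := by
  have hker : IsPseudoNull R (LinearMap.ker (β ∘ₗ α)) := by
    intro P hP
    rw [pn_iff_aux]
    rintro ⟨x, hx⟩
    obtain ⟨s, hs, h1⟩ := (pn_iff_aux R _ P).1 (hβ P hP) ⟨α x, hx⟩
    have h1 : s • α x = 0 := congrArg Subtype.val h1
    obtain ⟨t, ht, h2⟩ := (pn_iff_aux R _ P).1 (hα P hP) ⟨s • x, by simpa using h1⟩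
    have h2 : t • s • x = 0 := congrArg Subtype.val h2
    exact ⟨t * s, mul_mem ht hs, Subtype.ext (by simpa [mul_smul] using h2)⟩
  refine ⟨hker, fun P hP => ?_⟩
  have hkP := (pn_iff_aux R _ P).1 (hker P hP)
  let A := Localization.AtPrime P.asIdeal
  have hdim : ringKrullDim A = 1 := by
    rw [IsLocalization.AtPrime.ringKrullDim_eq_height P.asIdeal A, P.height_eq_orderHeight, hP]
    rfl
  have : IsNoetherianRing A := IsLocalization.isNoetherianRing P.asIdeal.primeCompl A inferInstance
  have : Ring.KrullDimLE 1 A := by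
    rw [Ring.KrullDimLE, Order.krullDimLE_iff]; exact hdim.le
  obtain ⟨a, ha, ha0⟩ := Submodule.annihilator_top_inter_nonZeroDivisors hM
  have hart : IsArtinian A (LocalizedModule P.asIdeal.primeCompl M) := by
    refine artinian_aux A _ (algebraMap R A a) ?_ ?_
    · exact IsLocalization.map_nonZeroDivisors_le P.asIdeal.primeCompl A ⟨a, ha0, rfl⟩
    · intro m
      induction m using LocalizedModule.induction_on with
      | h m s =>
        rw [algebraMap_smul, LocalizedModule.smul'_mk,
          Submodule.mem_annihilator.1 ha m trivial, LocalizedModule.zero_mk]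
  rw [← LinearMap.localizedMap_surjective_iff_subsingleton_localized_coker]
  have hinj : Function.Injective (LocalizedModule.map P.asIdeal.primeCompl (β ∘ₗ α)) := by
    rw [injective_iff_map_eq_zero]
    intro m
    induction m using LocalizedModule.induction_on with
    | h m s =>
      intro hm
      rw [LocalizedModule.map_mk, ← LocalizedModule.zero_mk 1,
        LocalizedModule.mk_eq] at hm
      obtain ⟨u, hu⟩ := hm
      have hu : (u : R) • (β ∘ₗ α) m = 0 := by
        simpa [Submonoid.smul_def] using hu
      obtain ⟨t, ht, h2⟩ := hkP ⟨(u : R) • m, by simpa using hu⟩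
      have h2 : t • (u : R) • m = 0 := congrArg Subtype.val h2
      rw [← LocalizedModule.zero_mk 1, LocalizedModule.mk_eq]
      refine ⟨⟨t, ht⟩ * u, ?_⟩
      simpa [Submonoid.smul_def, mul_smul] using h2
  exact IsArtinian.surjective_of_injective_endomorphism _ hinj
end

section
/- Let p be a prime and q = p^a with a ≥ 1. Fix an algebraic closure 𝔽̄_p of the field with p elements, for each n ≥ 0 let k_n ⊆ 𝔽̄_p be the (unique) finite subfield with q^{p^n} elements, and let k_∞ := ∪_{n≥0} k_n. Let W(k_∞) denote the ring of p-typical Witt vectors of k_∞, let F be the a-th iterate of the Witt vector Frobenius of W(k_∞), and let V be a finite-dimensional ℚ_p-vector space with a ℚ_p-linear endomorphism φ : V → V. Then the ℚ_p-linear endomorphism 1 − φ⊗F of V ⊗_{ℤ_p} W(k_∞) (which is a ℚ_p-vector space, the tensor product being taken over ℤ_p) is surjective, and its kernel is a finite-dimensional ℚ_p-vector space. -/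
set_option synthInstance.maxHeartbeats 1000000
set_option maxHeartbeats 1000000

/-- The subfield of fixed points of a field endomorphism. -/
def fixedSubfield {K : Type*} [Field K] (f : K →+* K) : Subfield K where
  carrier := {x | f x = x}
  mul_mem' := by
    intro a b ha hb
    simp only [Set.mem_setOf_eq] at *
    rw [map_mul, ha, hb]
  one_mem' := by simp only [Set.mem_setOf_eq, map_one]
  add_mem' := by
    intro a b ha hb
    simp only [Set.mem_setOf_eq] at *
    rw [map_add, ha, hb]
  zero_mem' := by simp only [Set.mem_setOf_eq, map_zero]
  neg_mem' := by
    intro a ha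
    simp only [Set.mem_setOf_eq] at *
    rw [map_neg, ha]
  inv_mem' := by
    intro a ha
    simp only [Set.mem_setOf_eq] at *
    rw [map_inv₀, ha]

/-- The unique subfield of `𝔽̄_p` with `q^{p^n}` elements (`q = p^a`), realized as the fixed
points of the `(a·p^n)`-th iterate of the Frobenius `x ↦ x^p`. -/
noncomputable def kLevel (p : ℕ) [Fact p.Prime] (a n : ℕ) :
    Subfield (AlgebraicClosure (ZMod p)) :=
  fixedSubfield (iterateFrobenius (AlgebraicClosure (ZMod p)) p (a * p ^ n))

/-- `k_∞ = ∪_{n ≥ 0} k_n`, the constant `ℤ_p`-extension of `𝔽_q` inside `𝔽̄_p`. -/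
noncomputable def kInf (p : ℕ) [Fact p.Prime] (a : ℕ) :
    Subfield (AlgebraicClosure (ZMod p)) :=
  ⨆ n : ℕ, kLevel p a n

instance (K : Type*) [Field K] (p : ℕ) [CharP K p] (S : Subfield K) : CharP S p :=
  S.subtype.charP Subtype.val_injective p

/-- The canonical `ℤ_p`-algebra structure map `ℤ_p →+* W(k)` for a field `k` of
characteristic `p`, obtained from `W(𝔽_p) ≃ ℤ_p` and functoriality of Witt vectors. -/
noncomputable def wittScalar (p : ℕ) [Fact p.Prime] (K : Type*) [Field K] [CharP K p] :
    ℤ_[p] →+* WittVector p K :=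
  (WittVector.map (ZMod.castHom dvd_rfl K)).comp (WittVector.equiv (p := p)).symm.toRingHom

section
open Polynomial

theorem aux_field (p : ℕ) [Fact p.Prime] (a : ℕ) (ha : 1 ≤ a) (K : Type*) [Field K]
    [Algebra (ZMod p) K] (f : Module.End (ZMod p) K) (hf : ∀ x, f x = x ^ (p ^ a))
    (h1 : ∀ x, ∃ n : ℕ, ((f - 1 : Module.End (ZMod p) K) ^ n) x = 0)
    (h2 : Function.Surjective (f - 1 : Module.End (ZMod p) K))
    (Q : (ZMod p)[X]) (hQ : Q ≠ 0) :
    Function.Surjective (aeval f Q) ∧ {x | aeval f Q x = 0}.Finite := by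
  constructor
  · obtain ⟨R, hR, hnd⟩ := Polynomial.exists_eq_pow_rootMultiplicity_mul_and_not_dvd Q hQ 1
    rw [hR, map_mul]
    have hs : Function.Surjective (aeval f R) := by
      intro y
      obtain ⟨n, hn⟩ := h1 y
      have hc : IsCoprime R ((X - C 1) ^ n) := by
        apply IsCoprime.pow_right
        exact (((Polynomial.prime_X_sub_C (1 : ZMod p)).irreducible.coprime_iff_not_dvd).2 hnd).symm
      obtain ⟨u, v, huv⟩ := hc
      refine ⟨aeval f u y, ?_⟩
      have := congrArg (fun P => aeval f P y) huv
      simp only [map_add, map_mul, map_pow, map_sub, aeval_X, map_one,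
        LinearMap.add_apply, Module.End.mul_apply, hn, map_zero, add_zero,
        Module.End.one_apply] at this
      rw [← Module.End.mul_apply, ← map_mul, mul_comm, map_mul]
      exact this
    have ht : Function.Surjective (aeval f ((X - C (1 : ZMod p)) ^ rootMultiplicity 1 Q)) := by
      simp only [map_pow, map_sub, aeval_X, map_one]
      rw [Module.End.coe_pow]
      exact h2.iterate _
    exact ht.comp hs
  · have hp := (Fact.out : p.Prime)
    let G : K[X] := ∑ i ∈ Finset.range (Q.natDegree + 1),
      C (algebraMap (ZMod p) K (Q.coeff i)) * X ^ ((p ^ a) ^ i)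
    have hfi : ∀ i x, (f ^ i) x = x ^ ((p ^ a) ^ i) := by
      intro i x
      induction i with
      | zero => simp
      | succ i ih => rw [pow_succ', Module.End.mul_apply, ih, hf, ← pow_mul, pow_succ]
    have hG : G ≠ 0 := by
      intro h
      have h3 := congrArg (fun P => P.coeff ((p ^ a) ^ Q.natDegree)) h
      simp only [G, finsetSum_coeff, coeff_C_mul, coeff_X_pow, coeff_zero] at h3
      rw [Finset.sum_eq_single Q.natDegree] at h3
      · simp [hQ] at h3
      · intro b _ hb
        rw [if_neg, mul_zero]
        intro h
        exact hb ((Nat.pow_right_injective (a := p ^ a) (by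
          calc 2 ≤ p := hp.two_le
            _ = p ^ 1 := (pow_one p).symm
            _ ≤ p ^ a := Nat.pow_le_pow_right hp.pos ha)) h).symm
      · intro h; simp at h
    classical
    refine (G.roots.toFinset.finite_toSet).subset ?_
    intro x hx
    simp only [Set.mem_ofPred_eq] at hx
    simp only [Finset.mem_coe, Multiset.mem_toFinset, mem_roots hG, IsRoot.def]
    rw [← hx]
    simp only [G, eval_finsetSum, eval_mul, eval_C, eval_pow, eval_X]
    rw [aeval_eq_sum_range, LinearMap.sum_apply]
    refine Finset.sum_congr rfl fun i _ => ?_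
    rw [LinearMap.smul_apply, hfi, Algebra.smul_def]

theorem aux_mem (p : ℕ) [Fact p.Prime] (N : Type*) [AddCommGroup N] [Module ℤ_[p] N] (n : ℕ)
    (x : N) : x ∈ (Ideal.span {(p : ℤ_[p])} ^ n • ⊤ : Submodule ℤ_[p] N) ↔
      ∃ y : N, x = (p : ℤ_[p]) ^ n • y := by
  rw [Ideal.span_singleton_pow, Submodule.ideal_span_singleton_smul,
    Submodule.mem_smul_pointwise_iff_exists]
  simp [eq_comm]

theorem aux_mem1 (p : ℕ) [Fact p.Prime] (N : Type*) [AddCommGroup N] [Module ℤ_[p] N]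
    (x : N) : x ∈ (Ideal.span {(p : ℤ_[p])} • ⊤ : Submodule ℤ_[p] N) ↔
      ∃ y : N, x = (p : ℤ_[p]) • y := by
  simpa using aux_mem p N 1 x

theorem aux_haus (p : ℕ) [Fact p.Prime] {W : Type*} [AddCommGroup W] [Module ℤ_[p] W]
    [IsHausdorff (Ideal.span {(p : ℤ_[p])}) W] (N : Submodule ℤ_[p] W) :
    IsHausdorff (Ideal.span {(p : ℤ_[p])}) N := by
  refine ⟨fun x hx => Subtype.ext ?_⟩
  refine IsHausdorff.haus (I := Ideal.span {(p : ℤ_[p])}) inferInstance x.1 fun n => ?_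
  have := hx n
  rw [SModEq.zero, aux_mem] at this ⊢
  obtain ⟨y, rfl⟩ := this
  exact ⟨y.1, rfl⟩

theorem aux_prec (p : ℕ) [Fact p.Prime] (S : Type*) :
    IsPrecomplete (Ideal.span {(p : ℤ_[p])}) (S → ℤ_[p]) := by
  have hI : IsAdicComplete (Ideal.span {(p : ℤ_[p])}) ℤ_[p] := by
    rw [← PadicInt.maximalIdeal_eq_span_p]; infer_instance
  refine ⟨fun f hf => ?_⟩
  have key : ∀ s, ∃ L : ℤ_[p], ∀ n, ∃ y, f n s - L = (p : ℤ_[p]) ^ n • y := by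
    intro s
    obtain ⟨L, hL⟩ := IsPrecomplete.prec (I := Ideal.span {(p : ℤ_[p])}) (M := ℤ_[p])
      inferInstance (f := fun n => f n s) (by
        intro m n hmn
        have := hf hmn
        rw [SModEq.sub_mem, aux_mem] at this ⊢
        obtain ⟨y, hy⟩ := this
        exact ⟨y s, congrFun hy s⟩)
    refine ⟨L, fun n => ?_⟩
    have := hL n
    rwa [SModEq.sub_mem, aux_mem] at this
  choose L y hy using key
  refine ⟨L, fun n => ?_⟩
  rw [SModEq.sub_mem, aux_mem]
  exact ⟨fun s => y s n, funext fun s => hy s n⟩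

theorem aux_lift (p : ℕ) [Fact p.Prime] (W k : Type*) [AddCommGroup W] [Module ℤ_[p] W]
    [AddCommGroup k] [Module (ZMod p) k]
    [IsAdicComplete (Ideal.span {(p : ℤ_[p])}) W]
    (htf : ∀ x : W, (p : ℤ_[p]) • x = 0 → x = 0)
    (π : W →+ k) (hπs : Function.Surjective π) (hπ : ∀ (c : ℤ_[p]) x, π (c • x) = PadicInt.toZMod c • π x)
    (hker : ∀ x, π x = 0 → ∃ y, x = (p : ℤ_[p]) • y)
    (F : Module.End ℤ_[p] W) (f : Module.End (ZMod p) k) (hF : ∀ x, π (F x) = f (π x))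
    (P : ℤ_[p][X])
    (h : Function.Surjective (aeval f (P.map PadicInt.toZMod)) ∧
      {x | aeval f (P.map PadicInt.toZMod) x = 0}.Finite) :
    Function.Surjective (aeval F P) ∧ (LinearMap.ker (aeval F P)).FG := by
  have hFi : ∀ i x, π ((F ^ i) x) = (f ^ i) (π x) := by
    intro i x
    induction i with
    | zero => simp
    | succ i ih => rw [pow_succ', pow_succ', Module.End.mul_apply, hF, ih, Module.End.mul_apply]
  have hred : ∀ x, (π (aeval F P x) = aeval f (P.map PadicInt.toZMod) (π x)) := by
    intro x
    clear h
    induction P using Polynomial.induction_on' with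
    | add P Q hP hQ =>
      simp only [map_add, LinearMap.add_apply, Polynomial.map_add, hP, hQ]
    | monomial n c => simp [aeval_monomial, hπ, hFi]
  constructor
  · apply surjective_of_mkQ_comp_surjective (I := Ideal.span {(p : ℤ_[p])})
    intro y
    obtain ⟨y, rfl⟩ := Submodule.mkQ_surjective _ y
    obtain ⟨t, ht⟩ := h.1 (π y)
    obtain ⟨x, rfl⟩ := hπs t
    refine ⟨x, ?_⟩
    obtain ⟨z, hz⟩ := hker (aeval F P x - y) (by rw [map_sub, hred, ht, sub_self])
    simp only [LinearMap.comp_apply, Submodule.mkQ_apply]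
    rw [Submodule.Quotient.eq, hz]
    rw [aux_mem1]; exact ⟨z, rfl⟩
  · set N := LinearMap.ker (aeval F P) with hN
    have hfin : (π '' (N : Set W)).Finite := by
      refine h.2.subset ?_
      rintro _ ⟨x, hx, rfl⟩
      have hx : aeval F P x = 0 := hx
      simp only [Set.mem_ofPred_eq]
      rw [← hred, hx, map_zero]
    obtain ⟨S, hS, hS1⟩ := Set.exists_subset_bijOn (N : Set W) π
    have hSf : S.Finite := by
      rw [← Set.BijOn.image_eq hS1] at hfin
      exact Set.Finite.of_finite_image hfin hS1.injOn
    have : Finite S := hSf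
    have : Fintype S := Fintype.ofFinite S
    let g : (S → ℤ_[p]) →ₗ[ℤ_[p]] N := Fintype.linearCombination ℤ_[p] (fun s : S => (⟨s.1, hS s.2⟩ : N))
    have := aux_haus p N
    have := aux_prec p S
    have hg : Function.Surjective g := by
      apply surjective_of_mkQ_comp_surjective (I := Ideal.span {(p : ℤ_[p])})
      intro y
      obtain ⟨y, rfl⟩ := Submodule.mkQ_surjective _ y
      classical
      obtain ⟨s, hs, hsy⟩ := hS1.surjOn (Set.mem_image_of_mem π y.2)
      refine ⟨Pi.single ⟨s, hs⟩ 1, ?_⟩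
      simp only [LinearMap.comp_apply, Submodule.mkQ_apply]
      rw [Submodule.Quotient.eq, aux_mem1]
      obtain ⟨z, hz⟩ := hker (s - y) (by rw [map_sub, hsy, sub_self])
      have hzN : z ∈ N := by
        have h1 : s - y.1 ∈ N := N.sub_mem (hS hs) y.2
        rw [hz, hN, LinearMap.mem_ker, map_smul] at h1
        exact htf _ h1
      refine ⟨⟨z, hzN⟩, ?_⟩
      ext
      simp [g, ← hz]
    have : Module.Finite ℤ_[p] N := Module.Finite.of_surjective g hg
    exact Module.Finite.iff_fg.1 this

theorem aux_scale (p : ℕ) [Fact p.Prime] (R : ℚ_[p][X]) (hR : R ≠ 0) :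
    ∃ (c : ℚ_[p]) (P : ℤ_[p][X]), c ≠ 0 ∧ R = C c * P.map (algebraMap ℤ_[p] ℚ_[p]) ∧
      P.map PadicInt.toZMod ≠ 0 := by
  obtain ⟨j, hj, hmax⟩ := Finset.exists_max_image R.support (fun i => ‖R.coeff i‖)
    (by simpa using hR)
  have hc : R.coeff j ≠ 0 := by simpa using hj
  have hle : ∀ i, ‖R.coeff i / R.coeff j‖ ≤ 1 := by
    intro i
    rw [norm_div]
    refine div_le_one_of_le₀ ?_ (norm_nonneg _)
    by_cases hi : R.coeff i = 0
    · rw [hi, norm_zero]; exact norm_nonneg _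
    · exact hmax i (by simpa using hi)
  let d : ℕ → ℤ_[p] := fun i => ⟨R.coeff i / R.coeff j, hle i⟩
  have hd : ∀ i, (d i : ℚ_[p]) = R.coeff i / R.coeff j := fun i => rfl
  clear_value d
  let P : ℤ_[p][X] := ∑ i ∈ R.support, monomial i (d i)
  have hP : ∀ i, P.coeff i = d i := by
    intro i
    simp only [P, finsetSum_coeff, coeff_monomial]
    rw [Finset.sum_ite_eq']
    split_ifs with h
    · rfl
    · have : R.coeff i = 0 := by simpa using h
      apply PadicInt.ext
      simp [hd, this]
  refine ⟨R.coeff j, P, hc, ?_, ?_⟩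
  · ext i
    rw [coeff_C_mul, coeff_map, hP]
    change _ = R.coeff j * (d i : ℚ_[p])
    rw [hd]
    field_simp
  · intro h
    have := congrArg (fun Q => Q.coeff j) h
    simp only [coeff_map, hP, coeff_zero] at this
    have h1 : d j = 1 := by
      apply PadicInt.ext; simp [hd, hc]
    rw [h1, map_one] at this
    exact one_ne_zero this

open TensorProduct in
theorem aux_finite (p : ℕ) [Fact p.Prime] (V : Type*) [AddCommGroup V] [Module ℚ_[p] V]
    [FiniteDimensional ℚ_[p] V] [Module ℤ_[p] V] [IsScalarTower ℤ_[p] ℚ_[p] V]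
    (N : Type*) [AddCommGroup N] [Module ℤ_[p] N] [Module.Finite ℤ_[p] N] :
    Module.Finite ℚ_[p] (V ⊗[ℤ_[p]] N) := by
  have e := TensorProduct.AlgebraTensorModule.cancelBaseChange ℤ_[p] ℚ_[p] ℚ_[p] V N
  exact Module.Finite.equiv e

theorem aux_factor {A B : Type*} [CommRing A] [Ring B] [Algebra A B] (x y : B) (hxy : Commute x y)
    (Q : A[X]) (hQ : aeval x Q = 0) :
    ∃ u v : B, aeval y Q.reverse = (1 - x * y) * u ∧ aeval y Q.reverse = v * (1 - x * y) := by
  have hrev : aeval y Q.reverse = ∑ i ∈ Finset.range (Q.natDegree + 1),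
      Q.coeff i • y ^ (Q.natDegree - i) := by
    rw [aeval_eq_sum_range' (n := Q.natDegree + 1)
      (Nat.lt_succ_of_le (reverse_natDegree_le Q)), ← Finset.sum_range_reflect]
    refine Finset.sum_congr rfl fun i hi => ?_
    have hi : i ≤ Q.natDegree := Nat.lt_succ_iff.1 (Finset.mem_range.1 hi)
    rw [coeff_reverse, Nat.add_sub_cancel, revAt_le (Nat.sub_le _ _), Nat.sub_sub_self hi]
  have hz : ∑ i ∈ Finset.range (Q.natDegree + 1),
      Q.coeff i • ((x * y) ^ i * y ^ (Q.natDegree - i)) = 0 := by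
    rw [aeval_eq_sum_range] at hQ
    calc _ = (∑ i ∈ Finset.range (Q.natDegree + 1), Q.coeff i • x ^ i) * y ^ Q.natDegree := by
          rw [Finset.sum_mul]
          refine Finset.sum_congr rfl fun i hi => ?_
          have hi : i ≤ Q.natDegree := Nat.lt_succ_iff.1 (Finset.mem_range.1 hi)
          rw [hxy.mul_pow, mul_assoc, ← pow_add, Nat.add_sub_cancel' hi, smul_mul_assoc]
      _ = 0 := by rw [hQ, zero_mul]
  have hc : ∀ i j : ℕ, (x * y) ^ i * y ^ j = y ^ j * (x * y) ^ i := fun i j =>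
    ((hxy.mul_left (Commute.refl y)).pow_pow i j)
  refine ⟨∑ i ∈ Finset.range (Q.natDegree + 1), Q.coeff i •
    ((∑ j ∈ Finset.range i, (x * y) ^ j) * y ^ (Q.natDegree - i)),
    ∑ i ∈ Finset.range (Q.natDegree + 1), Q.coeff i •
    (y ^ (Q.natDegree - i) * (∑ j ∈ Finset.range i, (x * y) ^ j)), ?_, ?_⟩
  · rw [Finset.mul_sum, hrev, ← sub_zero (∑ i ∈ _, _), ← hz, ← Finset.sum_sub_distrib]
    refine Finset.sum_congr rfl fun i _ => ?_
    rw [mul_smul_comm, ← mul_assoc, mul_neg_geom_sum, sub_mul, one_mul, smul_sub]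
  · rw [Finset.sum_mul, hrev, ← sub_zero (∑ i ∈ _, _), ← hz, ← Finset.sum_sub_distrib]
    refine Finset.sum_congr rfl fun i _ => ?_
    rw [smul_mul_assoc, mul_assoc, geom_sum_mul_neg, mul_sub, mul_one, smul_sub, hc]

open TensorProduct in
theorem aux_tensor (p : ℕ) [Fact p.Prime] (V : Type*) [AddCommGroup V] [Module ℚ_[p] V]
    [FiniteDimensional ℚ_[p] V] [Module ℤ_[p] V] [IsScalarTower ℤ_[p] ℚ_[p] V]
    (W : Type*) [AddCommGroup W] [Module ℤ_[p] W] (φ : V →ₗ[ℚ_[p]] V) (F : W →ₗ[ℤ_[p]] W)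
    (H : ∀ P : ℤ_[p][X], P.map PadicInt.toZMod ≠ 0 →
      Function.Surjective (aeval (R := ℤ_[p]) (A := Module.End ℤ_[p] W) F P) ∧
        (LinearMap.ker (aeval (R := ℤ_[p]) (A := Module.End ℤ_[p] W) F P)).FG) :
    Function.Surjective (LinearMap.id - TensorProduct.AlgebraTensorModule.map φ F :
      V ⊗[ℤ_[p]] W →ₗ[ℚ_[p]] V ⊗[ℤ_[p]] W) ∧
    FiniteDimensional ℚ_[p] (LinearMap.ker
      (LinearMap.id - TensorProduct.AlgebraTensorModule.map φ F :
      V ⊗[ℤ_[p]] W →ₗ[ℚ_[p]] V ⊗[ℤ_[p]] W)) := by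
  let x : Module.End ℚ_[p] (V ⊗[ℤ_[p]] W) := AlgebraTensorModule.map φ LinearMap.id
  let ψ : Module.End ℤ_[p] W → Module.End ℚ_[p] (V ⊗[ℤ_[p]] W) := fun G =>
    AlgebraTensorModule.map LinearMap.id G
  let y := ψ F
  have hxy : Commute x y := by
    refine AlgebraTensorModule.curry_injective ?_
    ext v w
    simp [x, y, ψ]
  have hmul : x * y = AlgebraTensorModule.map φ F := by
    refine AlgebraTensorModule.curry_injective ?_
    ext v w
    simp [x, y, ψ]
  have hxpow : ∀ i : ℕ, x ^ i = AlgebraTensorModule.map (φ ^ i) LinearMap.id := by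
    intro i
    refine AlgebraTensorModule.curry_injective ?_
    ext v w
    induction i generalizing v with
    | zero => simp
    | succ i ih => 
      have := ih (φ v)
      simpa [pow_succ, x] using this
  have hypow : ∀ i : ℕ, y ^ i = ψ (F ^ i) := by
    intro i
    refine AlgebraTensorModule.curry_injective ?_
    ext v w
    induction i generalizing w with
    | zero => simp [ψ]
    | succ i ih => 
      have := ih (F w)
      simpa [pow_succ, y, ψ] using this
  have hQ : aeval x φ.charpoly = 0 := by
    have h0 := LinearMap.aeval_self_charpoly φ
    refine AlgebraTensorModule.curry_injective ?_
    ext v w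
    have h1 := congrArg (fun g => (g v) ⊗ₜ[ℤ_[p]] w) h0
    simp only [aeval_eq_sum_range, LinearMap.sum_apply, LinearMap.smul_apply] at h1
    simpa [aeval_eq_sum_range, LinearMap.sum_apply, hxpow, TensorProduct.sum_tmul,
      TensorProduct.smul_tmul'] using h1
  have hne : φ.charpoly.reverse ≠ 0 := by
    rw [Ne, reverse_eq_zero]; exact φ.charpoly_monic.ne_zero
  obtain ⟨c, P, hc, hP, hP0⟩ := aux_scale p _ hne
  obtain ⟨u, v, hu, hv⟩ := aux_factor x y hxy _ hQ
  have hψ : aeval y φ.charpoly.reverse = c • ψ (aeval (R := ℤ_[p]) (A := Module.End ℤ_[p] W) F P) := by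
    rw [hP, map_mul, aeval_C, ← Algebra.smul_def]
    congr 1
    refine AlgebraTensorModule.curry_injective ?_
    ext v w
    rw [aeval_eq_sum_range' (n := P.natDegree + 1) (Nat.lt_succ_of_le natDegree_map_le),
      aeval_eq_sum_range]
    simp [hypow, ψ, TensorProduct.tmul_sum, LinearMap.sum_apply]
    refine Finset.sum_congr rfl fun i _ => ?_
    exact algebraMap_smul ℚ_[p] (P.coeff i) _
  obtain ⟨hs, hfg⟩ := H P hP0
  set G := aeval (R := ℤ_[p]) (A := Module.End ℤ_[p] W) F P with hG
  rw [hψ, hmul] at hu hv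
  have hψl : ∀ z, ψ G z = LinearMap.lTensor V G z := by
    intro z
    induction z with
    | zero => simp
    | tmul v w => simp [ψ]
    | add a b ha hb => rw [map_add, map_add, ha, hb]
  constructor
  · intro z
    obtain ⟨t, ht⟩ := LinearMap.lTensor_surjective V hs (c⁻¹ • z)
    refine ⟨u t, ?_⟩
    have := congrArg (fun g => g t) hu
    simp only [LinearMap.smul_apply, hψl, ht, smul_smul, mul_inv_cancel₀ hc, one_smul] at this
    exact this.symm
  · have : Module.Finite ℤ_[p] (LinearMap.ker G) := Module.Finite.iff_fg.2 hfg
    have := aux_finite p V (LinearMap.ker G)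
    have : Module.Flat ℤ_[p] ℚ_[p] := IsLocalization.flat ℚ_[p] (nonZeroDivisors ℤ_[p])
    have : Module.Flat ℤ_[p] V := Module.Flat.trans ℤ_[p] ℚ_[p] V
    have hex := Module.Flat.lTensor_exact V (LinearMap.exact_subtype_ker_map G)
    let j : V ⊗[ℤ_[p]] (LinearMap.ker G) →ₗ[ℚ_[p]] V ⊗[ℤ_[p]] W :=
      AlgebraTensorModule.map LinearMap.id (LinearMap.ker G).subtype
    have hle : LinearMap.ker (LinearMap.id - TensorProduct.AlgebraTensorModule.map φ F :
      V ⊗[ℤ_[p]] W →ₗ[ℚ_[p]] V ⊗[ℤ_[p]] W) ≤ LinearMap.range j := by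
      intro z hz
      have h1 := congrArg (fun g => g z) hv
      have hz' : (1 - AlgebraTensorModule.map φ F : Module.End ℚ_[p] (V ⊗[ℤ_[p]] W)) z = 0 := hz
      simp only [Module.End.mul_apply, hz', map_zero, LinearMap.smul_apply, hψl] at h1
      have h2 := (smul_eq_zero.1 h1).resolve_left hc
      obtain ⟨t, ht⟩ := (hex z).1 h2
      refine ⟨t, ?_⟩
      rw [← ht]
      rfl
    exact Submodule.finiteDimensional_of_le hle

theorem aux_mem_kInf (p : ℕ) [Fact p.Prime] (a : ℕ) (x : AlgebraicClosure (ZMod p)) :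
    x ∈ kInf p a ↔ ∃ n : ℕ, x ^ (p ^ (a * p ^ n)) = x := by
  have hmem : ∀ n, x ∈ kLevel p a n ↔ x ^ (p ^ (a * p ^ n)) = x := fun n => Iff.rfl
  have hmono : Monotone (kLevel p a) := by
    refine monotone_nat_of_le_succ fun n y hy => ?_
    have hy' : Function.IsFixedPt (iterateFrobenius (AlgebraicClosure (ZMod p)) p (a * p ^ n)) y := hy
    have h2 := hy'.iterate p
    change iterateFrobenius (AlgebraicClosure (ZMod p)) p (a * p ^ (n + 1)) y = y
    rw [pow_succ, ← mul_assoc, iterateFrobenius_mul_apply]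
    exact h2
  rw [kInf, Subfield.mem_iSup_of_directed hmono.directed_le]
  simp only [hmem]

theorem aux_perfect (p : ℕ) [Fact p.Prime] (a : ℕ) (ha : 1 ≤ a) : PerfectRing (kInf p a) p := by
  refine PerfectRing.ofSurjective _ p ?_
  rintro ⟨x, hx⟩
  obtain ⟨n, hn⟩ := (aux_mem_kInf p a x).1 hx
  refine ⟨⟨x, hx⟩ ^ (p ^ (a * p ^ n - 1)), ?_⟩
  ext
  simp only [frobenius_def, SubmonoidClass.coe_pow]
  rw [← pow_mul, ← pow_succ, Nat.sub_add_cancel, hn]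
  exact Nat.mul_pos ha (pow_pos (Fact.out : p.Prime).pos n)

/-- The `p ^ a`-power map as a linear endomorphism. -/
noncomputable def auxFrob (p : ℕ) [Fact p.Prime] (a : ℕ) (K : Type*) [Field K] [CharP K p]
    [Algebra (ZMod p) K] : Module.End (ZMod p) K where
  toFun x := x ^ (p ^ a)
  map_add' x y := add_pow_char_pow x y p a
  map_smul' c x := by
    simp only [Algebra.smul_def, mul_pow, RingHom.id_apply]
    rw [← map_pow, ZMod.pow_card_pow]

theorem auxFrob_pow (p : ℕ) [Fact p.Prime] (a : ℕ) (K : Type*) [Field K] [CharP K p]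
    [Algebra (ZMod p) K] (i : ℕ) (x : K) : (auxFrob p a K ^ i) x = x ^ (p ^ (a * i)) := by
  induction i with
  | zero => simp
  | succ i ih =>
    rw [pow_succ', Module.End.mul_apply, ih]
    change (x ^ (p ^ (a * i))) ^ (p ^ a) = _
    rw [← pow_mul, ← pow_add, mul_add, mul_one]

theorem auxFrob_sub_pow (p : ℕ) [Fact p.Prime] (a : ℕ) (K : Type*) [Field K] [CharP K p]
    [Algebra (ZMod p) K] (n : ℕ) (x : K) :
    ((auxFrob p a K - 1 : Module.End (ZMod p) K) ^ (p ^ n)) x = x ^ (p ^ (a * p ^ n)) - x := by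
  have h : ((X - 1 : (ZMod p)[X]) ^ (p ^ n)) = X ^ (p ^ n) - 1 := by
    rw [sub_pow_char_pow, one_pow]
  have h2 := congrArg (fun P => aeval (auxFrob p a K) P x) h
  simp only [map_pow, map_sub, aeval_X, map_one, LinearMap.sub_apply, auxFrob_pow,
    Module.End.one_apply] at h2
  exact h2

theorem aux_kInf (p : ℕ) [Fact p.Prime] (a : ℕ) (ha : 1 ≤ a) (K : Type*) [Field K] [CharP K p]
    [Algebra (ZMod p) K] (ι : K →+* AlgebraicClosure (ZMod p))
    (hι : ∀ x, x ∈ kInf p a ↔ ∃ y, ι y = x) :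
    (∀ x, ∃ n : ℕ, ((auxFrob p a K - 1 : Module.End (ZMod p) K) ^ n) x = 0) ∧
    Function.Surjective (auxFrob p a K - 1 : Module.End (ZMod p) K) := by
  have hp := (Fact.out : p.Prime)
  constructor
  · intro x
    obtain ⟨n, hn⟩ := (aux_mem_kInf p a (ι x)).1 ((hι _).2 ⟨x, rfl⟩)
    refine ⟨p ^ n, ?_⟩
    rw [auxFrob_sub_pow]
    apply ι.injective
    rw [map_sub, map_pow, hn, sub_self, map_zero]
  · intro y0
    obtain ⟨y, hy0⟩ : ∃ y, y = ι y0 := ⟨_, rfl⟩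
    obtain ⟨n, hn⟩ := (aux_mem_kInf p a y).1 ((hι _).2 ⟨y0, hy0.symm⟩)
    have hq : 1 < p ^ a := Nat.one_lt_pow (by omega) hp.one_lt
    obtain ⟨x, hx⟩ := IsAlgClosed.exists_root
      (X ^ (p ^ a) - X - C y : (AlgebraicClosure (ZMod p))[X]) (by
        rw [sub_sub, degree_sub_eq_left_of_degree_lt, degree_X_pow]
        · exact_mod_cast (by omega : p ^ a ≠ 0)
        · rw [degree_X_pow, degree_X_add_C]
          exact_mod_cast hq)
    have hx : x ^ (p ^ a) - x = y := by
      simpa [IsRoot.def, sub_eq_zero] using hx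
    set g := (auxFrob p a (AlgebraicClosure (ZMod p)) - 1 :
      Module.End (ZMod p) (AlgebraicClosure (ZMod p))) with hg
    have h1 : (g ^ (p ^ n)) y = 0 := by rw [hg, auxFrob_sub_pow, hn, sub_self]
    have h2 : g x = y := hx
    have h3 : (g ^ (p ^ n + 1)) x = 0 := by
      rw [pow_succ, Module.End.mul_apply, h2, h1]
    have h4 : (g ^ (p ^ (n + 1))) x = 0 := by
      have hle : p ^ n + 1 ≤ p ^ (n + 1) := Nat.pow_lt_pow_right hp.one_lt (Nat.lt_succ_self n)
      rw [← Nat.sub_add_cancel hle, pow_add, Module.End.mul_apply, h3, map_zero]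
    rw [hg, auxFrob_sub_pow, sub_eq_zero] at h4
    obtain ⟨x0, rfl⟩ := (hι x).1 ((aux_mem_kInf p a x).2 ⟨n + 1, h4⟩)
    refine ⟨x0, ι.injective ?_⟩
    rw [← hy0, ← hx, ← map_pow, ← map_sub]
    rfl

theorem aux_frob_scalar (p : ℕ) [Fact p.Prime] (K : Type*) [Field K] [CharP K p] (c : ℤ_[p]) :
    WittVector.frobenius (wittScalar p K c) = wittScalar p K c := by
  simp only [wittScalar, RingHom.comp_apply]
  generalize (WittVector.equiv p).symm.toRingHom c = z
  ext n
  rw [WittVector.coeff_frobenius_charP, WittVector.map_coeff, ← map_pow, ZMod.pow_card]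

theorem aux_const_scalar (p : ℕ) [Fact p.Prime] (K : Type*) [Field K] [CharP K p]
    [Algebra (ZMod p) K] (c : ℤ_[p]) :
    WittVector.constantCoeff (wittScalar p K c) = algebraMap (ZMod p) K (PadicInt.toZMod c) := by
  have key : ∀ g : ℤ_[p] →+* K, g c = (c.zmodRepr : K) := by
    intro g
    have h := PadicInt.sub_zmodRepr_mem c
    rw [PadicInt.maximalIdeal_eq_span_p, Ideal.mem_span_singleton] at h
    obtain ⟨d, hd⟩ := h
    have h2 := congrArg g hd
    rw [map_sub, map_mul, map_natCast, map_natCast, CharP.cast_eq_zero K p, zero_mul,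
      sub_eq_zero] at h2
    exact h2
  exact (key (WittVector.constantCoeff.comp (wittScalar p K))).trans
    (key ((algebraMap (ZMod p) K).comp PadicInt.toZMod)).symm

theorem aux_const_frob (p : ℕ) [Fact p.Prime] (K : Type*) [Field K] [CharP K p] (n : ℕ)
    (x : WittVector p K) : WittVector.constantCoeff ((⇑(WittVector.frobenius (p := p)))^[n] x) =
      (WittVector.constantCoeff x) ^ (p ^ n) := by
  induction n with
  | zero => simp
  | succ n ih =>
    rw [Function.iterate_succ_apply', pow_succ, pow_mul, ← ih]
    exact WittVector.coeff_frobenius_charP (p := p) _ _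

theorem aux_complete (p : ℕ) [Fact p.Prime] (K : Type*) [Field K] [CharP K p]
    [PerfectRing K p] :
    letI : Module ℤ_[p] (WittVector p K) := (wittScalar p K).toModule
    IsAdicComplete (Ideal.span {(p : ℤ_[p])}) (WittVector p K) := by
  letI : Algebra ℤ_[p] (WittVector p K) := (wittScalar p K).toAlgebra
  have h : (Ideal.span {(p : ℤ_[p])}).map (algebraMap ℤ_[p] (WittVector p K)) =
      Ideal.span {(p : WittVector p K)} := by
    rw [Ideal.map_span, Set.image_singleton, map_natCast]
  have h2 : IsAdicComplete ((Ideal.span {(p : ℤ_[p])}).map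
    (algebraMap ℤ_[p] (WittVector p K))) (WittVector p K) := by
    rw [h]; infer_instance
  exact { toIsHausdorff := IsHausdorff.map_algebraMap_iff.1 h2.toIsHausdorff
          toIsPrecomplete := IsPrecomplete.map_algebraMap_iff.1 h2.toIsPrecomplete }

theorem aux_main (p : ℕ) [Fact p.Prime] (a : ℕ) (ha : 1 ≤ a)
    (V : Type*) [AddCommGroup V] [Module ℚ_[p] V] [FiniteDimensional ℚ_[p] V]
    [Module ℤ_[p] V] [IsScalarTower ℤ_[p] ℚ_[p] V]
    (φ : V →ₗ[ℚ_[p]] V) (K : Type*) [Field K] [CharP K p] [PerfectRing K p]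
    (ι : K →+* AlgebraicClosure (ZMod p)) (hι : ∀ x, x ∈ kInf p a ↔ ∃ y, ι y = x)
    [Module ℤ_[p] (WittVector p K)] [IsAdicComplete (Ideal.span {(p : ℤ_[p])}) (WittVector p K)]
    (hsm : ∀ (c : ℤ_[p]) (x : WittVector p K), c • x = wittScalar p K c * x) :
    ∃ F : WittVector p K →ₗ[ℤ_[p]] WittVector p K,
      (∀ x : WittVector p K, F x = (⇑(WittVector.frobenius (p := p)))^[a] x) ∧
      Function.Surjective
        ⇑(LinearMap.id - TensorProduct.AlgebraTensorModule.map φ F :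
          TensorProduct ℤ_[p] V (WittVector p K) →ₗ[ℚ_[p]]
            TensorProduct ℤ_[p] V (WittVector p K)) ∧
      FiniteDimensional ℚ_[p]
        (LinearMap.ker (LinearMap.id - TensorProduct.AlgebraTensorModule.map φ F :
          TensorProduct ℤ_[p] V (WittVector p K) →ₗ[ℚ_[p]]
            TensorProduct ℤ_[p] V (WittVector p K))) := by
  let F : WittVector p K →ₗ[ℤ_[p]] WittVector p K :=
    { toFun := fun x => (⇑(WittVector.frobenius (p := p)))^[a] x
      map_add' := fun x y => iterate_map_add _ _ _ _
      map_smul' := fun c x => by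
        simp only [hsm, RingHom.id_apply]
        rw [iterate_map_mul, Function.iterate_fixed (aux_frob_scalar p _ c)] }
  refine ⟨F, fun x => rfl, ?_⟩
  letI : Algebra (ZMod p) K := ZMod.algebra _ p
  apply aux_tensor p V
  intro P hP
  refine aux_lift p (WittVector p K) K ?_
    (WittVector.constantCoeff : WittVector p K →+* K).toAddMonoidHom
    (WittVector.constantCoeff_surjective p) ?_ ?_ F (auxFrob p a K) ?_ P ?_
  · intro x hx
    rw [hsm, map_natCast, mul_comm] at hx
    exact WittVector.eq_zero_of_p_mul_eq_zero x hx
  · intro c x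
    rw [hsm, Algebra.smul_def]
    refine Eq.trans (map_mul (WittVector.constantCoeff (p := p) (R := K)) _ _) ?_
    rw [aux_const_scalar]; rfl
  · intro x hx
    have := (WittVector.mem_span_p_iff_coeff_zero_eq_zero x).2 hx
    obtain ⟨y, hy⟩ := Ideal.mem_span_singleton.1 this
    refine ⟨y, ?_⟩
    rw [hsm, map_natCast, hy]
  · intro x
    exact aux_const_frob p _ a x
  · exact aux_field p a ha _ _ (fun x => rfl) (aux_kInf p a ha K ι hι).1 (aux_kInf p a ha K ι hι).2 _ hP


end

/-- Let `q = p^a`, `k_∞ = ∪ k_n ⊆ 𝔽̄_p` the union of the subfields with `q^{p^n}` elements,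
`W(k_∞)` its ring of Witt vectors, `F` the `a`-th iterate of the Witt vector Frobenius
(which is `ℤ_p`-linear), and `φ` a `ℚ_p`-linear endomorphism of a finite-dimensional
`ℚ_p`-vector space `V`. Then the `ℚ_p`-linear endomorphism `1 - φ⊗F` of
`V ⊗_{ℤ_p} W(k_∞)` is surjective with finite-dimensional kernel over `ℚ_p`. -/
theorem stmt_15 (p : ℕ) [Fact p.Prime] (a : ℕ) (ha : 1 ≤ a)
    (V : Type*) [AddCommGroup V] [Module ℚ_[p] V] [FiniteDimensional ℚ_[p] V]
    (φ : V →ₗ[ℚ_[p]] V) :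
    letI : Module ℤ_[p] V := Module.compHom V (algebraMap ℤ_[p] ℚ_[p])
    letI : IsScalarTower ℤ_[p] ℚ_[p] V :=
      ⟨fun c q v => by
        show ((c • q) : ℚ_[p]) • v = (algebraMap ℤ_[p] ℚ_[p] c) • (q • v)
        rw [Algebra.smul_def, mul_smul]⟩
    letI : SMulCommClass ℤ_[p] ℚ_[p] V :=
      ⟨fun c q v => smul_comm (algebraMap ℤ_[p] ℚ_[p] c) q v⟩
    letI : Module ℤ_[p] (WittVector p (kInf p a)) := (wittScalar p (kInf p a)).toModule
    ∃ F : WittVector p (kInf p a) →ₗ[ℤ_[p]] WittVector p (kInf p a),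
      (∀ x : WittVector p (kInf p a), F x = (⇑(WittVector.frobenius (p := p)))^[a] x) ∧
      Function.Surjective
        ⇑(LinearMap.id - TensorProduct.AlgebraTensorModule.map φ F :
          TensorProduct ℤ_[p] V (WittVector p (kInf p a)) →ₗ[ℚ_[p]]
            TensorProduct ℤ_[p] V (WittVector p (kInf p a))) ∧
      FiniteDimensional ℚ_[p]
        (LinearMap.ker (LinearMap.id - TensorProduct.AlgebraTensorModule.map φ F :
          TensorProduct ℤ_[p] V (WittVector p (kInf p a)) →ₗ[ℚ_[p]]
            TensorProduct ℤ_[p] V (WittVector p (kInf p a)))) := by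
  letI : Module ℤ_[p] V := Module.compHom V (algebraMap ℤ_[p] ℚ_[p])
  letI : IsScalarTower ℤ_[p] ℚ_[p] V :=
    ⟨fun c q v => by
      show ((c • q) : ℚ_[p]) • v = (algebraMap ℤ_[p] ℚ_[p] c) • (q • v)
      rw [Algebra.smul_def, mul_smul]⟩
  letI : Module ℤ_[p] (WittVector p (kInf p a)) := (wittScalar p (kInf p a)).toModule
  haveI := aux_perfect p a ha
  haveI := aux_complete p (kInf p a)
  exact aux_main p a ha V φ (kInf p a) (kInf p a).subtype
    (fun x => ⟨fun h => ⟨⟨x, h⟩, rfl⟩, fun ⟨y, hy⟩ => hy ▸ y.2⟩) (fun c x => rfl)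
end
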